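/- Let λ, μ, ν ∈ P[n] with |ν| = |λ| + |μ|. Then the number of λ-dominant semi-standard Young tableaux of shape μ with entries ≤ n and weight ν−λ equals the number of μ-dominant contratableaux of shape λ with entries ≤ n and weight ν−μ (this is the classical case of the main bijection, recovering Carré's contratableau rule for the Littlewood–Richardson coefficient c^ν_{λ,μ}). -/

import Mathlib

/-!
A filling with weakly increasing rows is determined by its row contents, that is by the matrix
`a r v` counting the letters `v` in row `r`, and every matrix with the right row sums occurs
(`ncard_rowFill`). In terms of this matrix the conditions on a tableau are linear inequalities.
Column strictness compares partial sums of consecutive rows (`RowFill.col_iff`). Each row is read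
as a weakly decreasing word, so dominance only has to be tested just after the letters `i + 1` of a
row have been read (`lamDominant_rows`); with `N m k = lam m + #{m's in the top k rows}` it says
`N (i + 1) (k + 1) ≤ N i k`.

The bijection from `lam`-dominant tableaux with content `a` to `mu`-dominant contratableaux with
content `b` (rows numbered from the bottom) prescribes the number of letters `> v` in row `j` of
the contratableau to be `N (v + j) v`, that is `b j v = N (v - 1 + j) (v - 1) - N (v + j) v`
(`toCont`). Then

* `b ≥ 0` is dominance of the tableau, and column strictness of the contratableau is `a ≥ 0`;
* the row sums of `b` telescope to `N j 0 = lam j`;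
* `mu v` plus the number of `v`'s in the rows `≥ k` of the contratableau telescopes to
  `N (v + k - 1) (v - 1)` plus the number of letters `≤ v + k - 1` in row `v` of the tableau
  (`TabCond.sum_toCont`), so that dominance of the contratableau is column strictness of the
  tableau, and `k = 1` gives the weight `N v v = nu v`.

Conversely `N (v + j) v` is recovered from the contratableau as a tail sum of its row `j` for
`j ≥ 1`, and as `nu v` for `j = 0`; differences of these numbers give back `a` (`toTab`).
-/

/-!
Common combinatorial definitions: partitions, (skew) set-valued tableaux,
contratableaux, reading words, dominance, Gelfand-Tsetlin patterns, and the
maps Υ and Ω.  Partitions are encoded as functions `ℕ → ℕ` whose parts are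
`lam 1, lam 2, …` (with `lam 0 = 0` as a normalization).  Tableaux are encoded
as functions `ℕ → ℕ → Finset ℕ` assigning to each box (row, column), both
indexed from `1`, its (finite) set of entries, with value `∅` outside the
shape. -/

/-- `lam` is a partition with at most `n` nonzero parts `lam 1 ≥ lam 2 ≥ ⋯`. -/
def IsPartition (n : ℕ) (lam : ℕ → ℕ) : Prop :=
  lam 0 = 0 ∧ (∀ i, 1 ≤ i → lam (i + 1) ≤ lam i) ∧ (∀ i, n < i → lam i = 0)

/-- `|lam|`, the sum of the parts of a partition in `P[n]`. -/
def sumParts (n : ℕ) (lam : ℕ → ℕ) : ℕ := ∑ i ∈ Finset.Icc 1 n, lam i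

/-- The boxes of the skew Young diagram `lam/mu` (rows indexed from the top,
starting at `1`; columns from the left, starting at `1`). -/
def SkewBox (lam mu : ℕ → ℕ) (i j : ℕ) : Prop :=
  1 ≤ i ∧ mu i < j ∧ j ≤ lam i

/-- The boxes of the straight Young diagram of `mu`. -/
def ShapeBox (mu : ℕ → ℕ) (i j : ℕ) : Prop :=
  1 ≤ i ∧ 1 ≤ j ∧ j ≤ mu i

/-- A semi-standard set-valued tableau with entries in `[n] = {1, …, n}` on a
given set `box` of boxes (rows indexed from the top): every box carries a
nonempty subset of `[n]`, rows weakly increase from left to right, columns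
strictly increase from top to bottom, and the filling vanishes off the shape. -/
def IsSSVT (n : ℕ) (box : ℕ → ℕ → Prop) (T : ℕ → ℕ → Finset ℕ) : Prop :=
  (∀ i j, box i j → (T i j).Nonempty) ∧
  (∀ i j, box i j → T i j ⊆ Finset.Icc 1 n) ∧
  (∀ i j, ¬ box i j → T i j = ∅) ∧
  (∀ i j, box i j → box i (j + 1) → ∀ a ∈ T i j, ∀ b ∈ T i (j + 1), a ≤ b) ∧
  (∀ i j, box i j → box (i + 1) j → ∀ a ∈ T i j, ∀ b ∈ T (i + 1) j, a < b)

/-- The boxes of the rotated shape `C(lam)` (for `lam ∈ P[n]`): the `j`-th row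
from the *bottom* (`1 ≤ j ≤ n`) consists of `lam j` right-justified boxes, in
columns `lam 1 - lam j + 1, …, lam 1`. -/
def ContraBox (n : ℕ) (lam : ℕ → ℕ) (j c : ℕ) : Prop :=
  1 ≤ j ∧ j ≤ n ∧ lam 1 - lam j < c ∧ c ≤ lam 1

/-- A set-valued contratableau of shape `lam` with entries in `[n]`: a
semi-standard set-valued tableau of shape `C(lam)`.  Here `T j c` is the box in
the `j`-th row from the bottom and column `c`; "columns strictly increase from
top to bottom" says entries of row `j+1` (which lies above row `j`) are
strictly smaller than those below them in row `j`. -/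
def IsSVCT (n : ℕ) (lam : ℕ → ℕ) (T : ℕ → ℕ → Finset ℕ) : Prop :=
  (∀ j c, ContraBox n lam j c → (T j c).Nonempty) ∧
  (∀ j c, ContraBox n lam j c → T j c ⊆ Finset.Icc 1 n) ∧
  (∀ j c, ¬ ContraBox n lam j c → T j c = ∅) ∧
  (∀ j c, ContraBox n lam j c → ContraBox n lam j (c + 1) →
    ∀ a ∈ T j c, ∀ b ∈ T j (c + 1), a ≤ b) ∧
  (∀ j c, ContraBox n lam j c → ContraBox n lam (j + 1) c →
    ∀ a ∈ T (j + 1) c, ∀ b ∈ T j c, a < b)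

/-- The entries of one cell, read in decreasing order. -/
def cellWord (S : Finset ℕ) : List ℕ := (S.sort (· ≤ ·)).reverse

/-- The row word: rows are read from top to bottom, each row from right to
left, the entries of each cell in decreasing order (reading over the rectangle
with `R` rows and `W` columns, which covers the shape; cells off the shape are
empty and contribute nothing). -/
def rowWordRect (R W : ℕ) (T : ℕ → ℕ → Finset ℕ) : List ℕ :=
  ((List.range R).map (fun i =>
    (((List.range W).reverse).map (fun j => cellWord (T (i + 1) (j + 1)))).flatten)).flatten

/-- The column word: columns are read from rightmost to leftmost, each column
from top to bottom, the entries of each cell in decreasing order. -/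
def colWordRect (R W : ℕ) (T : ℕ → ℕ → Finset ℕ) : List ℕ :=
  (((List.range W).reverse).map (fun j =>
    ((List.range R).map (fun i => cellWord (T (i + 1) (j + 1)))).flatten)).flatten

/-- The row word of a contratableau whose rows are indexed from the bottom
(`1, …, n`): rows are read from top to bottom (i.e. row `n` first), each row
from right to left, cell entries in decreasing order. -/
def contraRowWord (n W : ℕ) (T : ℕ → ℕ → Finset ℕ) : List ℕ :=
  (((List.range n).reverse).map (fun j =>
    (((List.range W).reverse).map (fun c => cellWord (T (j + 1) (c + 1)))).flatten)).flatten

/-- A word is dominant if every prefix contains at least as many `i`'s as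
`(i+1)`'s, for every `i ≥ 1`. -/
def Dominant (u : List ℕ) : Prop :=
  ∀ t i, 1 ≤ i → (u.take t).count (i + 1) ≤ (u.take t).count i

/-- The row word of the superstandard tableau `T_lam` of shape and weight
`lam` (its `i`-th row consists of `lam i` many `i`'s), for `lam ∈ P[n]`. -/
def superWord (n : ℕ) (lam : ℕ → ℕ) : List ℕ :=
  ((List.range n).map (fun i => List.replicate (lam (i + 1)) (i + 1))).flatten

/-- A word `u` is `lam`-dominant if `r(T_lam) * u` is dominant. -/
def LamDominant (n : ℕ) (lam : ℕ → ℕ) (u : List ℕ) : Prop :=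
  Dominant (superWord n lam ++ u)

/-- The number of occurrences of the entry `v` in row `r` of `T`
(columns `1, …, W`). -/
def rowOcc (W : ℕ) (T : ℕ → ℕ → Finset ℕ) (r v : ℕ) : ℕ :=
  ∑ c ∈ Finset.Icc 1 W, if v ∈ T r c then 1 else 0

/-- The number of occurrences of the entry `v` in `T` (the `v`-th coordinate
of the weight `wt T`), rows `1, …, R` and columns `1, …, W`. -/
def wtT (R W : ℕ) (T : ℕ → ℕ → Finset ℕ) (v : ℕ) : ℕ :=
  ∑ r ∈ Finset.Icc 1 R, rowOcc W T r v

/-- The total number of entries `|T|` of a set-valued tableau. -/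
def sizeT (R W : ℕ) (T : ℕ → ℕ → Finset ℕ) : ℕ :=
  ∑ r ∈ Finset.Icc 1 R, ∑ c ∈ Finset.Icc 1 W, (T r c).card

/-- A Gelfand-Tsetlin pattern of size `n`: a triangular array of integers
`x i j` (`1 ≤ j ≤ i ≤ n`) with `NE_{i,j} = x i j - x (i-1) j ≥ 0` and
`SE_{i,j} = x (i-1) j - x i (j+1) ≥ 0` for all `1 ≤ j < i ≤ n`, normalized to
vanish outside the triangle. -/
def IsGT (n : ℕ) (x : ℕ → ℕ → ℤ) : Prop :=
  (∀ i j, 1 ≤ j → j < i → i ≤ n → x (i - 1) j ≤ x i j ∧ x i (j + 1) ≤ x (i - 1) j) ∧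
  (∀ i j, ¬ (1 ≤ j ∧ j ≤ i ∧ i ≤ n) → x i j = 0)

/-- A GT pattern in `GT_ℤ(lam)`: bottom row equal to `lam`. -/
def IsGTZ (n : ℕ) (lam : ℕ → ℕ) (x : ℕ → ℕ → ℤ) : Prop :=
  IsGT n x ∧ ∀ j, 1 ≤ j → j ≤ n → x n j = (lam j : ℤ)

/-- A valid set of marks on a GT pattern: `M ⊆ {(i,j) : 1 ≤ j < i ≤ n` and
`SE_{i,j}(x) > 0}`. -/
def MarksOK (n : ℕ) (x : ℕ → ℕ → ℤ) (M : Finset (ℕ × ℕ)) : Prop :=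
  ∀ p ∈ M, 1 ≤ p.2 ∧ p.2 < p.1 ∧ p.1 ≤ n ∧ 0 < x (p.1 - 1) p.2 - x p.1 (p.2 + 1)

/-- A marked GT pattern in `MGT_ℤ(lam)`. -/
def IsMGTZ (n : ℕ) (lam : ℕ → ℕ) (x : ℕ → ℕ → ℤ) (M : Finset (ℕ × ℕ)) : Prop :=
  IsGTZ n lam x ∧ MarksOK n x M

/-- The map `Υ` from marked GT patterns to set-valued tableaux, in closed form:
the entry `i` lies in the box in row `r`, column `c` iff `x_{i-1,r} < c ≤ x_{i,r}`
(the horizontal strip `x^{(i)}/x^{(i-1)}` is filled with `i`'s), or `(i,r) ∈ M`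
and `c = x_{i-1,r}` (for a mark, `i` is added to the rightmost box of row `r`
of `X^{(i-1)}`, the box containing `i-1` there). -/
def Upsilon (n : ℕ) (x : ℕ → ℕ → ℤ) (M : Finset (ℕ × ℕ)) : ℕ → ℕ → Finset ℕ :=
  fun r c => (Finset.Icc 1 n).filter (fun i =>
    (x (i - 1) r < (c : ℤ) ∧ (c : ℤ) ≤ x i r) ∨ ((i, r) ∈ M ∧ (c : ℤ) = x (i - 1) r))

/-- The map `Ω` from marked GT patterns to set-valued contratableaux of shape
`lam`, in closed form.  Rows are indexed from the bottom and the box in row `j`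
and column `c` is the `d`-th box from the right where `d = lam 1 + 1 - c`.
The entry `v = n + 1 - i` lies there iff `y_{i-1,j} < d ≤ y_{i,j}` (the boxes
of `C(y^{(i)})/C(y^{(i-1)})` are filled with `n+1-i`), or `(i,j) ∈ M` and
`d = y_{i-1,j}` (for a mark, `n+1-i` is added to the leftmost box of row `j`
of `Y^{(i-1)}`, the box containing `n+2-i` there). -/
def Omega (n : ℕ) (lam : ℕ → ℕ) (y : ℕ → ℕ → ℤ) (M : Finset (ℕ × ℕ)) : ℕ → ℕ → Finset ℕ :=
  fun j c => (Finset.Icc 1 n).filter (fun v =>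
    (y (n - v) j < (lam 1 : ℤ) + 1 - (c : ℤ) ∧ (lam 1 : ℤ) + 1 - (c : ℤ) ≤ y (n + 1 - v) j) ∨
      ((n + 1 - v, j) ∈ M ∧ (lam 1 : ℤ) + 1 - (c : ℤ) = y (n - v) j))

/-- `N_{i,k} = lam i + (number of occurrences of i in the top k rows of T)`. -/
def Ndom (W : ℕ) (lam : ℕ → ℕ) (T : ℕ → ℕ → Finset ℕ) (i k : ℕ) : ℕ :=
  lam i + ∑ r ∈ Finset.Icc 1 k, rowOcc W T r i

/-- `N↑_{i,k} = mu i + (number of occurrences of i in rows k, k+1, …, n from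
the bottom of a contratableau)`. -/
def Nup (n W : ℕ) (mu : ℕ → ℕ) (T : ℕ → ℕ → Finset ℕ) (i k : ℕ) : ℕ :=
  mu i + ∑ r ∈ Finset.Icc k n, rowOcc W T r i

/-- The GT pattern `Y_T` with entries `y_{i,j} = N_{n-i+j, n-i}` (normalized to
`0` outside the triangle). -/
def Ypat (n W : ℕ) (lam : ℕ → ℕ) (T : ℕ → ℕ → Finset ℕ) : ℕ → ℕ → ℤ :=
  fun i j => if 1 ≤ j ∧ j ≤ i ∧ i ≤ n then (Ndom W lam T (n - i + j) (n - i) : ℤ) else 0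

/-- The transported mark set `M' = {(n+1-j, i-j) : (i,j) ∈ M}`. -/
def MarksOf (n : ℕ) (M : Finset (ℕ × ℕ)) : Finset (ℕ × ℕ) :=
  M.image (fun p => (n + 1 - p.2, p.1 - p.2))

/-- The stable Grothendieck polynomial `G_lam(x_1, …, x_n)`, a polynomial in
variables `X 1, …, X n`. -/
noncomputable def Groth (n : ℕ) (lam : ℕ → ℕ) : MvPolynomial ℕ ℤ :=
  ∑ᶠ T ∈ {T : ℕ → ℕ → Finset ℕ | IsSSVT n (ShapeBox lam) T},
    (-1 : MvPolynomial ℕ ℤ) ^ (sizeT n (lam 1) T - sumParts n lam) *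
      ∏ k ∈ Finset.Icc 1 n, MvPolynomial.X k ^ wtT n (lam 1) T k


/-! ### Matrices of row contents -/

/-- The partial row sum `a r 1 + ⋯ + a r i`. -/
def pre (a : ℕ → ℕ → ℕ) (r i : ℕ) : ℕ := ∑ w ∈ Finset.range i, a r (w + 1)

theorem pre_zero (a : ℕ → ℕ → ℕ) (r : ℕ) : pre a r 0 = 0 := by simp [pre]

theorem pre_succ (a : ℕ → ℕ → ℕ) (r i : ℕ) : pre a r (i + 1) = pre a r i + a r (i + 1) := by
  simp [pre, Finset.sum_range_succ]

theorem pre_mono (a : ℕ → ℕ → ℕ) (r : ℕ) : Monotone (pre a r) :=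
  monotone_nat_of_le_succ fun i => by rw [pre_succ]; omega

/-- The matrices of row contents: `a r v` counts the letters `v ∈ [n]` in row `r ≥ 1`, and row `r`
has `l r` letters in total. -/
def IsMat (n : ℕ) (l : ℕ → ℕ) (a : ℕ → ℕ → ℕ) : Prop :=
  (∀ r v, ¬ (1 ≤ r ∧ 1 ≤ v ∧ v ≤ n) → a r v = 0) ∧ ∀ r, 1 ≤ r → pre a r n = l r

theorem IsMat.pre_of_le {n : ℕ} {l : ℕ → ℕ} {a : ℕ → ℕ → ℕ} (h : IsMat n l a) {r i : ℕ}
    (hr : 1 ≤ r) (hi : n ≤ i) : pre a r i = l r := by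
  induction i, hi using Nat.le_induction with
  | base => exact h.2 r hr
  | succ i hi ih => rw [pre_succ, ih, h.1 r (i + 1) (by omega)]; rfl

theorem IsMat.pre_le {n : ℕ} {l : ℕ → ℕ} {a : ℕ → ℕ → ℕ} (h : IsMat n l a) {r : ℕ}
    (hr : 1 ≤ r) (i : ℕ) : pre a r i ≤ l r := by
  rw [← h.pre_of_le hr (le_max_right i n)]
  exact pre_mono a r (le_max_left i n)

/-! ### Fillings with weakly increasing rows -/

/-- The boxes of the arrangement whose row `r ≥ 1` occupies the columns `s r + 1, …, s r + l r`. -/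
def Box (s l : ℕ → ℕ) (r c : ℕ) : Prop := 1 ≤ r ∧ s r < c ∧ c ≤ s r + l r

/-- Fillings of `Box s l` by one letter of `[n]` per box, with weakly increasing rows. -/
def RowFill (n : ℕ) (s l : ℕ → ℕ) (T : ℕ → ℕ → Finset ℕ) : Prop :=
  (∀ r c, Box s l r c → T r c ⊆ Finset.Icc 1 n) ∧
  (∀ r c, ¬ Box s l r c → T r c = ∅) ∧
  (∀ r c, Box s l r c → Box s l r (c + 1) → ∀ a ∈ T r c, ∀ b ∈ T r (c + 1), a ≤ b) ∧
  (∀ r c, Box s l r c → (T r c).card = 1)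

section Fill

variable {n W : ℕ} {s l : ℕ → ℕ} {T : ℕ → ℕ → Finset ℕ}

theorem RowFill.exists_eq (h : RowFill n s l T) {r c : ℕ} (hb : Box s l r c) :
    ∃ u, T r c = {u} ∧ 1 ≤ u ∧ u ≤ n := by
  obtain ⟨u, hu⟩ := Finset.card_eq_one.1 (h.2.2.2 r c hb)
  have := h.1 r c hb (show u ∈ T r c by simp [hu])
  exact ⟨u, hu, Finset.mem_Icc.1 this⟩

theorem RowFill.box_of_mem (h : RowFill n s l T) {r c u : ℕ} (hu : u ∈ T r c) : Box s l r c := by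
  by_contra hb
  simp [h.2.1 r c hb] at hu

theorem RowFill.mono (h : RowFill n s l T) {r c d a b : ℕ} (hcd : c ≤ d)
    (ha : a ∈ T r c) (hb : b ∈ T r d) : a ≤ b := by
  induction d, hcd using Nat.le_induction generalizing b with
  | base =>
    obtain ⟨u, hu, -⟩ := h.exists_eq (h.box_of_mem ha)
    simp_all
  | succ d hd ih =>
    have h1 := h.box_of_mem ha
    have h2 := h.box_of_mem hb
    have h3 : Box s l r d := ⟨h1.1, by have := h1.2.1; omega, by have := h2.2.2; omega⟩
    obtain ⟨u, hu, -⟩ := h.exists_eq h3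
    exact (ih (b := u) (by simp [hu])).trans (h.2.2.1 r d h3 h2 u (by simp [hu]) b hb)

/-- The `i`-th partial row sum of the content counts the boxes of the row with a letter `≤ i`. -/
theorem RowFill.pre_eq (h : RowFill n s l T) (r i : ℕ) :
    pre (rowOcc W T) r i = ((Finset.Icc 1 W).filter (fun c => ∃ u ∈ T r c, u ≤ i)).card := by
  unfold pre rowOcc
  rw [Finset.sum_comm, Finset.card_filter]
  refine Finset.sum_congr rfl fun c _ => ?_
  by_cases hb : Box s l r c
  · obtain ⟨u, hu, h1, h2⟩ := h.exists_eq hb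
    simp only [hu, Finset.mem_singleton, exists_eq_left]
    rw [← Finset.card_filter]
    split_ifs with hi
    · rw [Finset.card_eq_one]
      refine ⟨u - 1, ?_⟩
      ext w
      simp only [Finset.mem_filter, Finset.mem_range, Finset.mem_singleton]
      omega
    · rw [Finset.card_eq_zero, Finset.filter_eq_empty_iff]
      intro w hw
      have := Finset.mem_range.1 hw
      omega
  · simp [h.2.1 r c hb]

/-- Since rows increase weakly, the letters `≤ i` of row `r` fill its first boxes, as many as the
`i`-th partial row sum of the content. -/
theorem RowFill.le_iff (h : RowFill n s l T) (hW : ∀ r, 1 ≤ r → s r + l r ≤ W) {r c u : ℕ}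
    (hu : u ∈ T r c) (i : ℕ) : u ≤ i ↔ c ≤ s r + pre (rowOcc W T) r i := by
  rw [h.pre_eq]
  have hb := h.box_of_mem hu
  have hWr := hW r hb.1
  obtain ⟨hr, h1, h2⟩ := hb
  constructor
  · intro hui
    have : (Finset.Ioc (s r) c).card ≤
        ((Finset.Icc 1 W).filter (fun c => ∃ u ∈ T r c, u ≤ i)).card := by
      refine Finset.card_le_card fun d hd => ?_
      rw [Finset.mem_Ioc] at hd
      obtain ⟨u', hu', -⟩ := h.exists_eq (r := r) (c := d) ⟨hr, by omega, by omega⟩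
      have hm : u' ∈ T r d := by simp [hu']
      rw [Finset.mem_filter, Finset.mem_Icc]
      exact ⟨by omega, u', hm, (h.mono hd.2 hm hu).trans hui⟩
    rw [Nat.card_Ioc] at this
    omega
  · intro hc
    by_contra hui
    have : ((Finset.Icc 1 W).filter (fun c => ∃ u ∈ T r c, u ≤ i)).card ≤
        (Finset.Ioo (s r) c).card := by
      refine Finset.card_le_card fun d hd => ?_
      rw [Finset.mem_filter] at hd
      obtain ⟨-, u', hu', hle⟩ := hd
      rw [Finset.mem_Ioo]
      refine ⟨(h.box_of_mem hu').2.1, ?_⟩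
      by_contra hdc
      have := h.mono (not_lt.1 hdc) hu hu'
      omega
    rw [Nat.card_Ioo] at this
    omega

theorem RowFill.isMat (h : RowFill n s l T) (hW : ∀ r, 1 ≤ r → s r + l r ≤ W) :
    IsMat n l (rowOcc W T) := by
  constructor
  · intro r v hrv
    unfold rowOcc
    refine Finset.sum_eq_zero fun c _ => if_neg fun hv => hrv ?_
    have hb := h.box_of_mem hv
    exact ⟨hb.1, Finset.mem_Icc.1 (h.1 r c hb hv)⟩
  · intro r hr
    have hWr := hW r hr
    rw [h.pre_eq, show (Finset.Icc 1 W).filter (fun c => ∃ u ∈ T r c, u ≤ n) =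
      Finset.Ioc (s r) (s r + l r) from ?_, Nat.card_Ioc]
    · omega
    · ext c
      rw [Finset.mem_filter, Finset.mem_Ioc, Finset.mem_Icc]
      constructor
      · rintro ⟨-, u, hu, -⟩
        exact (h.box_of_mem hu).2
      · rintro ⟨h1, h2⟩
        obtain ⟨u, hu, -, hn⟩ := h.exists_eq (r := r) (c := c) ⟨hr, h1, h2⟩
        exact ⟨by omega, u, by simp [hu], hn⟩

theorem RowFill.mem_iff (h : RowFill n s l T) (hW : ∀ r, 1 ≤ r → s r + l r ≤ W) (r c v : ℕ) :
    v + 1 ∈ T r c ↔ Box s l r c ∧ s r + pre (rowOcc W T) r v < c ∧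
      c ≤ s r + pre (rowOcc W T) r (v + 1) := by
  constructor
  · intro hv
    have h1 := h.le_iff hW hv v
    have h2 := h.le_iff hW hv (v + 1)
    exact ⟨h.box_of_mem hv, by omega, by omega⟩
  · rintro ⟨hb, h1, h2⟩
    obtain ⟨u, hu, -⟩ := h.exists_eq hb
    have hm : u ∈ T r c := by simp [hu]
    have h3 := h.le_iff hW hm v
    have h4 := h.le_iff hW hm (v + 1)
    have : v + 1 = u := by omega
    rwa [this]

/-- A row-increasing filling is determined by its matrix of row contents. -/
theorem RowFill.ext {T' : ℕ → ℕ → Finset ℕ} (h : RowFill n s l T) (h' : RowFill n s l T')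
    (hW : ∀ r, 1 ≤ r → s r + l r ≤ W) (he : rowOcc W T = rowOcc W T') : T = T' := by
  funext r c
  ext v
  rcases v with _ | v
  · refine iff_of_false (fun hv => ?_) (fun hv => ?_)
    · have := Finset.mem_Icc.1 (h.1 r c (h.box_of_mem hv) hv)
      omega
    · have := Finset.mem_Icc.1 (h'.1 r c (h'.box_of_mem hv) hv)
      omega
  · rw [h.mem_iff hW, h'.mem_iff hW, he]

/-- For an upper row `p` and a lower row `q` whose ends lie weakly to the left of those of `p`,
strict increase down the common columns amounts to inequalities between partial row sums. -/
theorem RowFill.col_iff (h : RowFill n s l T) (hW : ∀ r, 1 ≤ r → s r + l r ≤ W) {p q : ℕ}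
    (hp : 1 ≤ p) (hq : 1 ≤ q) (hs : s q ≤ s p) (hl : s q + l q ≤ s p + l p) :
    (∀ c, Box s l p c → Box s l q c → ∀ a ∈ T p c, ∀ b ∈ T q c, a < b) ↔
      ∀ i, s q + pre (rowOcc W T) q (i + 1) ≤ s p + pre (rowOcc W T) p i := by
  constructor
  · intro H i
    by_contra hlt
    push Not at hlt
    have hle := (h.isMat hW).pre_le hq (i + 1)
    have hbp : Box s l p (s q + pre (rowOcc W T) q (i + 1)) := ⟨hp, by omega, by omega⟩
    have hbq : Box s l q (s q + pre (rowOcc W T) q (i + 1)) := ⟨hq, by omega, by omega⟩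
    obtain ⟨a, ha, -⟩ := h.exists_eq hbp
    obtain ⟨b, hb, -⟩ := h.exists_eq hbq
    have ha' : a ∈ T p _ := ha ▸ Finset.mem_singleton_self a
    have hb' : b ∈ T q _ := hb ▸ Finset.mem_singleton_self b
    have h1 := h.le_iff hW ha' i
    have h2 := h.le_iff hW hb' (i + 1)
    have h3 := H _ hbp hbq a ha' b hb'
    omega
  · intro H c hbp hbq a ha b hb
    have hb1 := Finset.mem_Icc.1 (h.1 q c hbq hb)
    obtain ⟨i, rfl⟩ : ∃ i, b = i + 1 := ⟨b - 1, by omega⟩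
    have h1 := h.le_iff hW ha i
    have h2 := h.le_iff hW hb (i + 1)
    have h3 := H i
    omega

/-- The row-increasing filling with prescribed row contents `a`. -/
def fill (n : ℕ) (s : ℕ → ℕ) (a : ℕ → ℕ → ℕ) : ℕ → ℕ → Finset ℕ := fun r c =>
  (Finset.Icc 1 n).filter (fun v => s r + pre a r (v - 1) < c ∧ c ≤ s r + pre a r v)

theorem fill_unique {a : ℕ → ℕ → ℕ} {r c u v : ℕ} (hu : u ∈ fill n s a r c)
    (hv : v ∈ fill n s a r c) : u ≤ v := by
  by_contra hlt
  simp only [fill, Finset.mem_filter] at hu hv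
  have := pre_mono a r (show v ≤ u - 1 by omega)
  omega

theorem rowFill_fill {a : ℕ → ℕ → ℕ} (ha : IsMat n l a) : RowFill n s l (fill n s a) := by
  refine ⟨fun r c _ => Finset.filter_subset _ _, ?_, ?_, ?_⟩
  · intro r c hb
    refine Finset.filter_eq_empty_iff.2 fun v hv hc => hb ?_
    rw [Finset.mem_Icc] at hv
    rcases Nat.eq_zero_or_pos r with rfl | hr
    · have : pre a 0 v = 0 := Finset.sum_eq_zero fun w _ => ha.1 _ _ (by omega)
      omega
    · have := ha.pre_le hr v
      exact ⟨hr, by omega, by omega⟩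
  · intro r c _ _ u hu v hv
    by_contra hlt
    simp only [fill, Finset.mem_filter] at hu hv
    have := pre_mono a r (show v ≤ u - 1 by omega)
    omega
  · rintro r c ⟨hr, h1, h2⟩
    have hex : ∃ v, c ≤ s r + pre a r v := ⟨n, by rw [ha.2 r hr]; exact h2⟩
    have hf := Nat.find_spec hex
    have hmin := fun m => Nat.find_min hex (m := m)
    have hn : Nat.find hex ≤ n := Nat.find_min' hex (by rw [ha.2 r hr]; exact h2)
    have h0 : Nat.find hex ≠ 0 := by
      intro h0
      rw [h0, pre_zero] at hf
      omega
    have hm := hmin (Nat.find hex - 1) (by omega)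
    have hmem : Nat.find hex ∈ fill n s a r c := by
      simp only [fill, Finset.mem_filter, Finset.mem_Icc]
      omega
    rw [Finset.card_eq_one]
    refine ⟨Nat.find hex, Finset.eq_singleton_iff_unique_mem.2 ⟨hmem, fun v hv => ?_⟩⟩
    exact le_antisymm (fill_unique hv hmem) (fill_unique hmem hv)

theorem rowOcc_fill {a : ℕ → ℕ → ℕ} (ha : IsMat n l a) (hW : ∀ r, 1 ≤ r → s r + l r ≤ W) :
    rowOcc W (fill n s a) = a := by
  funext r v
  by_cases hrv : 1 ≤ r ∧ 1 ≤ v ∧ v ≤ n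
  · obtain ⟨hr, hv, hvn⟩ := hrv
    obtain ⟨v, rfl⟩ : ∃ i, v = i + 1 := ⟨v - 1, by omega⟩
    unfold rowOcc
    rw [← Finset.card_filter]
    have hle := ha.pre_le hr (v + 1)
    have hWr := hW r hr
    have : (Finset.Icc 1 W).filter (fun c => v + 1 ∈ fill n s a r c) =
        Finset.Ioc (s r + pre a r v) (s r + pre a r (v + 1)) := by
      ext c
      simp only [fill, Finset.mem_filter, Finset.mem_Icc, Finset.mem_Ioc, Nat.add_sub_cancel]
      omega
    rw [this, Nat.card_Ioc, pre_succ]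
    omega
  · rw [((rowFill_fill (s := s) ha).isMat hW).1 r v hrv, ha.1 r v hrv]

/-- Row-increasing fillings are in bijection with their matrices of row contents. -/
theorem ncard_rowFill (hW : ∀ r, 1 ≤ r → s r + l r ≤ W) (P : (ℕ → ℕ → ℕ) → Prop) :
    Set.ncard {T | RowFill n s l T ∧ P (rowOcc W T)} = Set.ncard {a | IsMat n l a ∧ P a} := by
  refine Set.ncard_congr (fun T _ => rowOcc W T) ?_ ?_ ?_
  · rintro T ⟨h, hP⟩
    exact ⟨h.isMat hW, hP⟩
  · rintro T T' ⟨h, -⟩ ⟨h', -⟩ he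
    exact h.ext h' hW he
  · rintro a ⟨ha, hP⟩
    have he := rowOcc_fill (s := s) ha hW
    exact ⟨fill n s a, ⟨rowFill_fill ha, by rwa [he]⟩, he⟩

end Fill

/-! ### Dominance of words made of weakly decreasing rows -/

/-- Dominance of the word `u` read after a word in which each letter `i` occurs `f i` times. -/
def DomFrom (f : ℕ → ℕ) (u : List ℕ) : Prop :=
  ∀ t i, 1 ≤ i → f (i + 1) + (u.take t).count (i + 1) ≤ f i + (u.take t).count i

theorem domFrom_append (f : ℕ → ℕ) (u v : List ℕ) :
    DomFrom f (u ++ v) ↔ DomFrom f u ∧ DomFrom (fun i => f i + u.count i) v := by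
  constructor
  · intro h
    refine ⟨fun t i hi => ?_, fun t i hi => ?_⟩
    · have := h (min t u.length) i hi
      rw [List.take_append_of_le_length (min_le_right _ _)] at this
      simpa [List.take_eq_take_min] using this
    · have := h (u.length + t) i hi
      rw [List.take_length_add_append, List.count_append, List.count_append] at this
      dsimp only
      omega
  · rintro ⟨h1, h2⟩ t i hi
    rcases le_total t u.length with ht | ht
    · rw [List.take_append_of_le_length ht]
      exact h1 t i hi
    · obtain ⟨k, rfl⟩ := Nat.exists_eq_add_of_le ht
      rw [List.take_length_add_append, List.count_append, List.count_append]
      have := h2 k i hi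
      dsimp only at this
      omega

/-- In a weakly decreasing word all letters `i + 1` precede the letters `i`. -/
theorem domFrom_of_pairwise (f : ℕ → ℕ) {u : List ℕ} (hu : u.Pairwise (· ≥ ·)) :
    DomFrom f u ↔ ∀ i, 1 ≤ i → f (i + 1) + u.count (i + 1) ≤ f i := by
  constructor
  · intro h i hi
    -- the initial segment formed by the letters `> i` is the critical one
    obtain ⟨t, ht⟩ : ∃ t, u.takeWhile (fun x => decide (i < x)) = u.take t :=
      ⟨_, List.takeWhile_eq_take_findIdx_not⟩
    have h1 := h t i hi
    rw [← ht] at h1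
    have h2 : (u.takeWhile (fun x => decide (i < x))).count i = 0 := by
      rw [List.count_eq_zero]
      intro hm
      have := List.mem_takeWhile_imp hm
      simp at this
    have h3 : (u.takeWhile (fun x => decide (i < x))).count (i + 1) = u.count (i + 1) := by
      clear h h1 h2 ht
      induction u with
      | nil => rfl
      | cons x u ih =>
        rw [List.pairwise_cons] at hu
        by_cases hx : i < x
        · rw [List.takeWhile_cons_of_pos (by simpa using hx), List.count_cons, List.count_cons,
            ih hu.2]
        · rw [List.takeWhile_cons_of_neg (by simpa using hx)]
          symm
          rw [List.count_nil, List.count_eq_zero]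
          intro hm
          rcases List.mem_cons.1 hm with he | hm
          · omega
          · have := hu.1 _ hm
            omega
    omega
  · intro h t i hi
    have h1 := h i hi
    have h2 : (u.take t).count (i + 1) ≤ u.count (i + 1) :=
      (List.take_sublist t u).count_le _
    omega

theorem count_rows (R : ℕ → List ℕ) (k i : ℕ) :
    (((List.range k).map R).flatten).count i = ∑ r ∈ Finset.range k, (R r).count i := by
  induction k with
  | zero => simp
  | succ k ih =>
    rw [List.range_succ, List.map_append, List.flatten_append, List.count_append, ih,
      Finset.sum_range_succ]
    simp

theorem domFrom_rows (f : ℕ → ℕ) (R : ℕ → List ℕ) (hR : ∀ r, (R r).Pairwise (· ≥ ·)) (m : ℕ)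
    (hf : ∀ i, 1 ≤ i → f (i + 1) ≤ f i) :
    DomFrom f ((List.range m).map R).flatten ↔ ∀ k, k < m → ∀ i, 1 ≤ i →
      f (i + 1) + ∑ r ∈ Finset.range (k + 1), (R r).count (i + 1) ≤
        f i + ∑ r ∈ Finset.range k, (R r).count i := by
  induction m with
  | zero => simpa [DomFrom] using hf
  | succ m ih =>
    rw [List.range_succ, List.map_append, List.flatten_append, domFrom_append, ih]
    simp only [List.map_cons, List.map_nil, List.flatten_cons, List.flatten_nil, List.append_nil]
    rw [domFrom_of_pairwise _ (hR m)]
    simp only [count_rows]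
    constructor
    · rintro ⟨h1, h2⟩ k hk i hi
      rcases Nat.lt_succ_iff_lt_or_eq.1 hk with hk | rfl
      · exact h1 k hk i hi
      · have := h2 i hi
        rw [Finset.sum_range_succ]
        omega
    · intro h
      refine ⟨fun k hk => h k (by omega), fun i hi => ?_⟩
      have := h m (by omega) i hi
      rw [Finset.sum_range_succ] at this
      omega

theorem IsPartition.count_super {n : ℕ} {lam : ℕ → ℕ} (h : IsPartition n lam) (i : ℕ) :
    (superWord n lam).count i = lam i := by
  unfold superWord
  rw [count_rows]
  simp only [List.count_replicate, beq_iff_eq]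
  rcases i with _ | i
  · simp [h.1]
  · simp only [Nat.add_right_cancel_iff, Finset.sum_ite_eq', Finset.mem_range]
    split_ifs with hi
    · rfl
    · exact (h.2.2 _ (by omega)).symm

theorem IsPartition.dominant_super {n : ℕ} {lam : ℕ → ℕ} (h : IsPartition n lam) :
    DomFrom (fun _ => 0) (superWord n lam) := by
  unfold superWord
  rw [domFrom_rows _ _ (fun r => List.pairwise_replicate.2 (Or.inr le_rfl)) _ (by simp)]
  intro k hk i hi
  obtain ⟨i, rfl⟩ : ∃ j, i = j + 1 := ⟨i - 1, by omega⟩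
  simp only [List.count_replicate, beq_iff_eq, Nat.add_right_cancel_iff, Finset.sum_ite_eq',
    Finset.mem_range]
  have := h.2.1 (i + 1) (by omega)
  split_ifs <;> omega

theorem lamDominant_rows {n : ℕ} {lam : ℕ → ℕ} (h : IsPartition n lam) (R : ℕ → List ℕ)
    (hR : ∀ r, (R r).Pairwise (· ≥ ·)) (m : ℕ) :
    LamDominant n lam ((List.range m).map R).flatten ↔ ∀ k, k < m → ∀ i, 1 ≤ i →
      lam (i + 1) + ∑ r ∈ Finset.range (k + 1), (R r).count (i + 1) ≤
        lam i + ∑ r ∈ Finset.range k, (R r).count i := by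
  have h0 : LamDominant n lam ((List.range m).map R).flatten ↔
      DomFrom (fun _ => 0) (superWord n lam ++ ((List.range m).map R).flatten) := by
    simp [LamDominant, Dominant, DomFrom]
  rw [h0, domFrom_append]
  simp only [h.dominant_super, h.count_super, true_and, zero_add]
  exact domFrom_rows lam R hR m h.2.1

/-- The word of row `r`, read from right to left. -/
def rowWord (W : ℕ) (T : ℕ → ℕ → Finset ℕ) (r : ℕ) : List ℕ :=
  (((List.range W).reverse).map (fun j => cellWord (T r (j + 1)))).flatten

theorem count_cellWord (S : Finset ℕ) (v : ℕ) : (cellWord S).count v = if v ∈ S then 1 else 0 := by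
  unfold cellWord
  rw [List.count_reverse]
  have hnd := S.sort_nodup (· ≤ ·)
  split_ifs with h
  · exact List.count_eq_one_of_mem hnd ((Finset.mem_sort _).2 h)
  · exact List.count_eq_zero_of_not_mem (fun h' => h ((Finset.mem_sort _).1 h'))

theorem sum_Icc_one (g : ℕ → ℕ) (m : ℕ) :
    ∑ c ∈ Finset.Icc 1 m, g c = ∑ t ∈ Finset.range m, g (t + 1) := by
  induction m with
  | zero => simp
  | succ m ih => rw [Finset.sum_Icc_succ_top (by omega), ih, Finset.sum_range_succ]

theorem sum_range_flip (g : ℕ → ℕ) (m : ℕ) :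
    ∑ t ∈ Finset.range m, g (m - t) = ∑ t ∈ Finset.range m, g (t + 1) := by
  rw [← Finset.sum_range_reflect (fun t => g (t + 1))]
  refine Finset.sum_congr rfl fun t ht => ?_
  rw [Finset.mem_range] at ht
  congr 1
  omega

theorem map_reverse_range (R : ℕ → List ℕ) (m : ℕ) :
    ((List.range m).reverse).map (fun j => R (j + 1)) = (List.range m).map (fun t => R (m - t)) := by
  rw [List.range_eq_range', List.reverse_range', List.map_map, List.range_eq_range']
  refine List.map_congr_left fun t ht => ?_
  rw [List.mem_range'_1] at ht
  simp only [Function.comp]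
  congr 1
  omega

theorem count_rowWord (W : ℕ) (T : ℕ → ℕ → Finset ℕ) (r v : ℕ) :
    (rowWord W T r).count v = rowOcc W T r v := by
  unfold rowWord rowOcc
  rw [map_reverse_range (fun j => cellWord (T r j)), count_rows]
  simp only [count_cellWord]
  rw [sum_range_flip (fun c => if v ∈ T r c then 1 else 0), sum_Icc_one]

theorem RowFill.pairwise_rowWord {n : ℕ} {s l : ℕ → ℕ} {T : ℕ → ℕ → Finset ℕ}
    (h : RowFill n s l T) (W r : ℕ) : (rowWord W T r).Pairwise (· ≥ ·) := by
  unfold rowWord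
  rw [List.pairwise_flatten]
  constructor
  · intro u hu
    rw [List.mem_map] at hu
    obtain ⟨j, -, rfl⟩ := hu
    unfold cellWord
    rw [List.pairwise_reverse]
    exact Finset.pairwise_sort _ _
  · rw [List.pairwise_map, List.pairwise_reverse]
    refine List.pairwise_lt_range.imp fun {i j} hij => ?_
    intro x hx y hy
    simp only [cellWord, List.mem_reverse, Finset.mem_sort] at hx hy
    exact h.mono (show i + 1 ≤ j + 1 by omega) hy hx


/-! ### The linear bijection between the two sets of matrices -/

/-- The conditions on the row contents of a `lam`-dominant tableau of weight `nu - lam`: column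
strictness, dominance and weight. -/
def TabCond (n : ℕ) (lam nu : ℕ → ℕ) (a : ℕ → ℕ → ℕ) : Prop :=
  (∀ r, 1 ≤ r → ∀ i, pre a (r + 1) (i + 1) ≤ pre a r i) ∧
  (∀ k, k < n → ∀ i, 1 ≤ i → lam (i + 1) + ∑ t ∈ Finset.range (k + 1), a (t + 1) (i + 1) ≤
    lam i + ∑ t ∈ Finset.range k, a (t + 1) i) ∧
  ∀ i, 1 ≤ i → i ≤ n → lam i + ∑ t ∈ Finset.range n, a (t + 1) i = nu i

/-- The conditions on the row contents (rows numbered from the bottom) of a `mu`-dominant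
contratableau of shape `lam` and weight `nu - mu`: column strictness, dominance and weight. -/
def ContCond (n : ℕ) (lam mu nu : ℕ → ℕ) (b : ℕ → ℕ → ℕ) : Prop :=
  (∀ j, 1 ≤ j → ∀ i, lam 1 - lam j + pre b j (i + 1) ≤ lam 1 - lam (j + 1) + pre b (j + 1) i) ∧
  (∀ k, k < n → ∀ i, 1 ≤ i → mu (i + 1) + ∑ t ∈ Finset.range (k + 1), b (n - t) (i + 1) ≤
    mu i + ∑ t ∈ Finset.range k, b (n - t) i) ∧
  ∀ i, 1 ≤ i → i ≤ n → mu i + ∑ t ∈ Finset.range n, b (n - t) i = nu i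

theorem IsPartition.le_one {n : ℕ} {lam : ℕ → ℕ} (h : IsPartition n lam) {j : ℕ} (hj : 1 ≤ j) :
    lam j ≤ lam 1 := by
  induction j, hj using Nat.le_induction with
  | base => exact le_rfl
  | succ j hj ih => exact (h.2.1 j hj).trans ih

/-- `numTop lam a m k` is `lam m` plus the number of letters `m` in the top `k` rows. -/
def numTop (lam : ℕ → ℕ) (a : ℕ → ℕ → ℕ) (m k : ℕ) : ℕ :=
  lam m + ∑ t ∈ Finset.range k, a (t + 1) m

theorem numTop_succ (lam : ℕ → ℕ) (a : ℕ → ℕ → ℕ) (m k : ℕ) :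
    numTop lam a m (k + 1) = numTop lam a m k + a (k + 1) m := by
  simp [numTop, Finset.sum_range_succ, add_assoc]

/-- The content of the contratableau attached to a tableau with content `a`. The truncated
subtraction is exact for dominant tableaux (`TabCond.toCont_add`). -/
def toCont (lam : ℕ → ℕ) (a : ℕ → ℕ → ℕ) (j v : ℕ) : ℕ :=
  if 1 ≤ j ∧ 1 ≤ v then numTop lam a (v - 1 + j) (v - 1) - numTop lam a (v + j) v else 0

section Forward

variable {n : ℕ} {lam mu nu : ℕ → ℕ} {a : ℕ → ℕ → ℕ}

/-- Column strictness forces the letters of row `r` to be at least `r`. -/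
theorem TabCond.pre_eq_zero (h : TabCond n lam nu a) {r i : ℕ} (hi : i < r) : pre a r i = 0 := by
  induction r generalizing i with
  | zero => omega
  | succ r ih =>
    rcases i with _ | i
    · exact pre_zero a _
    · have h1 := h.1 r (by omega) i
      have h2 := ih (i := i) (by omega)
      omega

theorem TabCond.eq_zero (h : TabCond n lam nu a) {r i : ℕ} (hi : 1 ≤ i) (hr : i < r) :
    a r i = 0 := by
  obtain ⟨i, rfl⟩ : ∃ j, i = j + 1 := ⟨i - 1, by omega⟩
  have := h.pre_eq_zero hr
  rw [pre_succ] at this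
  omega

theorem numTop_of_lt (hlam : IsPartition n lam) (ha : IsMat n mu a) {m : ℕ} (hm : n < m) (k : ℕ) :
    numTop lam a m k = 0 := by
  unfold numTop
  rw [hlam.2.2 m hm, Finset.sum_eq_zero fun t _ => ha.1 _ _ (by omega), zero_add]

theorem TabCond.numTop_of_le (h : TabCond n lam nu a) {m k : ℕ} (hm : 1 ≤ m) (hk : m ≤ k) :
    numTop lam a m k = numTop lam a m m := by
  induction k, hk using Nat.le_induction with
  | base => rfl
  | succ k hk ih => rw [numTop_succ, ih, h.eq_zero hm (by omega), add_zero]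

theorem TabCond.numTop_self (h : TabCond n lam nu a) {m : ℕ} (hm : 1 ≤ m) (hmn : m ≤ n) :
    numTop lam a m m = nu m := by
  rw [← h.numTop_of_le hm hmn]
  exact h.2.2 m hm hmn

theorem TabCond.toCont_add (h : TabCond n lam nu a) (hlam : IsPartition n lam) (ha : IsMat n mu a)
    {j : ℕ} (hj : 1 ≤ j) (v : ℕ) :
    toCont lam a j (v + 1) + numTop lam a (v + 1 + j) (v + 1) = numTop lam a (v + j) v := by
  unfold toCont
  rw [if_pos ⟨hj, by omega⟩, Nat.add_sub_cancel]
  refine Nat.sub_add_cancel ?_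
  by_cases hv : v < n
  · have := h.2.1 v hv (v + j) (by omega)
    rw [show v + 1 + j = v + j + 1 by omega]
    exact this
  · rw [numTop_of_lt hlam ha (by omega)]
    exact Nat.zero_le _

theorem TabCond.pre_toCont (h : TabCond n lam nu a) (hlam : IsPartition n lam) (ha : IsMat n mu a)
    {j : ℕ} (hj : 1 ≤ j) (i : ℕ) :
    pre (toCont lam a) j i + numTop lam a (i + j) i = lam j := by
  induction i with
  | zero => simp [pre, numTop]
  | succ i ih =>
    have := h.toCont_add hlam ha hj i
    rw [pre_succ]
    omega

/-- The telescoping identity exchanging dominance and column strictness: `mu v` plus the number of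
letters `v` in the top `k` rows of the contratableau. -/
theorem TabCond.sum_toCont (h : TabCond n lam nu a) (hlam : IsPartition n lam) (ha : IsMat n mu a)
    (v : ℕ) {k : ℕ} (hk : k ≤ n) :
    mu (v + 1) + ∑ t ∈ Finset.range k, toCont lam a (n - t) (v + 1) =
      numTop lam a (v + 1 + (n - k)) v + pre a (v + 1) (v + 1 + (n - k)) := by
  induction k with
  | zero =>
    rw [Nat.sub_zero, numTop_of_lt hlam ha (by omega), ha.pre_of_le (by omega) (by omega)]
    simp
  | succ k ih =>
    have ih := ih (by omega)
    obtain ⟨m, hm⟩ : ∃ m, n - k = m + 1 := ⟨n - k - 1, by omega⟩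
    rw [Finset.sum_range_succ]
    rw [hm] at ih ⊢
    rw [show n - (k + 1) = m by omega]
    have h1 := h.toCont_add hlam ha (j := m + 1) (by omega) v
    rw [numTop_succ, show v + (m + 1) = v + 1 + m by omega] at h1
    rw [← add_assoc (v + 1) m 1] at ih h1
    rw [pre_succ] at ih
    omega

theorem TabCond.isMat_toCont (h : TabCond n lam nu a) (hlam : IsPartition n lam)
    (ha : IsMat n mu a) : IsMat n lam (toCont lam a) := by
  constructor
  · intro j v hjv
    by_cases h1 : 1 ≤ j ∧ 1 ≤ v
    · unfold toCont
      rw [if_pos h1, numTop_of_lt hlam ha (by omega), Nat.zero_sub]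
    · unfold toCont
      rw [if_neg h1]
  · intro j hj
    have := h.pre_toCont hlam ha hj n
    rwa [numTop_of_lt hlam ha (by omega), add_zero] at this

theorem TabCond.contCond_toCont (h : TabCond n lam nu a) (hlam : IsPartition n lam)
    (ha : IsMat n mu a) : ContCond n lam mu nu (toCont lam a) := by
  refine ⟨?_, ?_, ?_⟩
  · intro j hj i
    have h1 := h.pre_toCont hlam ha hj (i + 1)
    have h2 := h.pre_toCont hlam ha (j := j + 1) (by omega) i
    rw [numTop_succ, show i + 1 + j = i + (j + 1) by omega] at h1
    have h3 := hlam.le_one hj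
    have h4 := hlam.le_one (j := j + 1) (by omega)
    omega
  · intro k hk i hi
    obtain ⟨v, rfl⟩ : ∃ v, i = v + 1 := ⟨i - 1, by omega⟩
    rw [h.sum_toCont hlam ha _ (by omega), h.sum_toCont hlam ha _ (by omega)]
    obtain ⟨m, hm⟩ : ∃ m, n - k = m + 1 := ⟨n - k - 1, by omega⟩
    rw [hm, show n - (k + 1) = m by omega, numTop_succ, ← add_assoc (v + 1) m 1, pre_succ,
      show v + 1 + 1 + m = v + 1 + m + 1 by omega]
    have := h.1 (v + 1) (by omega) (v + 1 + m)
    omega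
  · intro i hi hin
    obtain ⟨v, rfl⟩ : ∃ v, i = v + 1 := ⟨i - 1, by omega⟩
    rw [h.sum_toCont hlam ha _ le_rfl, ← h.numTop_self hi hin, numTop_succ, Nat.sub_self, add_zero,
      pre_succ, h.pre_eq_zero (by omega), zero_add]

/-- The contratableau determines the numbers `numTop`, hence the tableau. -/
theorem toCont_injOn {a' : ℕ → ℕ → ℕ} (hlam : IsPartition n lam) (ha : IsMat n mu a)
    (ha' : IsMat n mu a') (h : TabCond n lam nu a) (h' : TabCond n lam nu a')
    (he : toCont lam a = toCont lam a') : a = a' := by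
  have key : ∀ j v, numTop lam a (v + j) v = numTop lam a' (v + j) v := by
    intro j v
    rcases Nat.eq_zero_or_pos j with rfl | hj
    · rcases Nat.eq_zero_or_pos v with rfl | hv
      · simp [numTop]
      · by_cases hvn : v ≤ n
        · rw [add_zero, h.numTop_self hv hvn, h'.numTop_self hv hvn]
        · rw [numTop_of_lt hlam ha (by omega), numTop_of_lt hlam ha' (by omega)]
    · have h1 := h.pre_toCont hlam ha hj v
      have h2 := h'.pre_toCont hlam ha' hj v
      rw [he] at h1
      omega
  funext r m
  by_cases hrm : 1 ≤ r ∧ 1 ≤ m ∧ m ≤ n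
  · obtain ⟨hr, hm, -⟩ := hrm
    rcases lt_or_ge m r with hlt | hle
    · rw [h.eq_zero hm hlt, h'.eq_zero hm hlt]
    · obtain ⟨r, rfl⟩ : ∃ v, r = v + 1 := ⟨r - 1, by omega⟩
      obtain ⟨j, rfl⟩ := Nat.exists_eq_add_of_le hle
      have h1 := key j (r + 1)
      have h2 := key (j + 1) r
      rw [numTop_succ, numTop_succ] at h1
      rw [show r + (j + 1) = r + 1 + j by omega] at h2
      omega
  · rw [ha.1 r m hrm, ha'.1 r m hrm]

end Forward

/-- `tail lam nu b j v` is the number of letters `> v` in row `j ≥ 1` of the contratableau, and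
`nu v` for `j = 0`. -/
def tail (lam nu : ℕ → ℕ) (b : ℕ → ℕ → ℕ) (j v : ℕ) : ℕ :=
  if j = 0 then nu v else lam j - pre b j v

/-- The content of the tableau attached to a contratableau with content `b`. The truncated
subtraction is exact for dominant contratableaux (`ContCond.toTab_add`). -/
def toTab (lam nu : ℕ → ℕ) (b : ℕ → ℕ → ℕ) (r m : ℕ) : ℕ :=
  if 1 ≤ r ∧ r ≤ m then tail lam nu b (m - r) r - tail lam nu b (m - r + 1) (r - 1) else 0

section Backward

variable {n : ℕ} {lam mu nu : ℕ → ℕ} {b : ℕ → ℕ → ℕ}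

theorem tail_add (hb : IsMat n lam b) {j : ℕ} (hj : 1 ≤ j) (v : ℕ) :
    tail lam nu b j v + pre b j v = lam j := by
  unfold tail
  rw [if_neg (by omega)]
  exact Nat.sub_add_cancel (hb.pre_le hj v)

theorem tail_zero_row (v : ℕ) : tail lam nu b 0 v = nu v := by simp [tail]

theorem tail_succ (hb : IsMat n lam b) {j : ℕ} (hj : 1 ≤ j) (v : ℕ) :
    tail lam nu b j (v + 1) + b j (v + 1) = tail lam nu b j v := by
  have h1 := tail_add (nu := nu) hb hj v
  have h2 := tail_add (nu := nu) hb hj (v + 1)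
  rw [pre_succ] at h2
  omega

/-- Dominance and the weight condition at the bottom row say that
`nu i - tail 1 (i - 1)` decreases in `i`, so it is nonnegative, as it is for `i > n`. -/
theorem ContCond.tail_le_nu (h : ContCond n lam mu nu b)
    (hb : IsMat n lam b) (v : ℕ) : tail lam nu b 1 v ≤ nu (v + 1) := by
  by_cases hv : n ≤ v
  · have h1 := tail_add (nu := nu) hb le_rfl v
    rw [hb.pre_of_le le_rfl hv] at h1
    omega
  · push Not at hv
    induction hv.le using Nat.decreasingInduction with
    | self => omega
    | of_succ v hvn ih =>
      have h1 := tail_succ (nu := nu) hb le_rfl v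
      have h2 := h.2.2 (v + 1) (by omega) (by omega)
      obtain ⟨m, rfl⟩ : ∃ m, n = m + 1 := ⟨n - 1, by omega⟩
      rw [Finset.sum_range_succ, show m + 1 - m = 1 by omega] at h2
      rcases Nat.lt_or_ge (v + 1) (m + 1) with hlt | hge
      · have h3 := h.2.1 m (by omega) (v + 1) (by omega)
        have h4 := h.2.2 (v + 1 + 1) (by omega) (by omega)
        have h5 := ih hlt
        omega
      · have h3 := tail_add (nu := nu) hb le_rfl (v + 1)
        rw [hb.pre_of_le le_rfl hge] at h3
        omega

theorem ContCond.tail_le (h : ContCond n lam mu nu b) (hlam : IsPartition n lam)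
    (hb : IsMat n lam b) (j v : ℕ) :
    tail lam nu b (j + 1) v ≤ tail lam nu b j (v + 1) := by
  rcases Nat.eq_zero_or_pos j with rfl | hj
  · rw [tail_zero_row]
    exact h.tail_le_nu hb v
  · have h1 := tail_add (nu := nu) hb hj (v + 1)
    have h2 := tail_add (nu := nu) hb (j := j + 1) (by omega) v
    have h3 := hlam.le_one hj
    have h4 := hlam.le_one (j := j + 1) (by omega)
    have h5 := h.1 j hj v
    omega

theorem ContCond.tail_eq_zero (h : ContCond n lam mu nu b) (hlam : IsPartition n lam)
    (hnu : IsPartition n nu) (hb : IsMat n lam b) {j v : ℕ}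
    (hjv : n < j + v) : tail lam nu b j v = 0 := by
  induction j generalizing v with
  | zero => rw [tail_zero_row, hnu.2.2 v (by omega)]
  | succ j ih =>
    have h1 := h.tail_le hlam hb j v
    have h2 := ih (v := v + 1) (by omega)
    omega

theorem ContCond.toTab_add (h : ContCond n lam mu nu b) (hlam : IsPartition n lam)
    (hb : IsMat n lam b) (j r : ℕ) :
    toTab lam nu b (r + 1) (r + 1 + j) + tail lam nu b (j + 1) r = tail lam nu b j (r + 1) := by
  unfold toTab
  rw [if_pos ⟨by omega, by omega⟩, Nat.add_sub_cancel, Nat.add_sub_cancel_left]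
  exact Nat.sub_add_cancel (h.tail_le hlam hb j r)

theorem toTab_of_lt {r m : ℕ} (hr : m < r) : toTab lam nu b r m = 0 :=
  if_neg (by omega)

theorem pre_toTab_of_lt {r m : ℕ} (hr : m < r) : pre (toTab lam nu b) r m = 0 :=
  Finset.sum_eq_zero fun w hw => toTab_of_lt (by rw [Finset.mem_range] at hw; omega)

theorem ContCond.numTop_toTab (h : ContCond n lam mu nu b) (hlam : IsPartition n lam)
    (hb : IsMat n lam b) (j k : ℕ) (hjk : 1 ≤ k + j) :
    numTop lam (toTab lam nu b) (k + j) k = tail lam nu b j k := by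
  induction k generalizing j with
  | zero =>
    have := tail_add (nu := nu) hb (j := j) (by omega) 0
    rw [pre_zero] at this
    simp only [numTop, Finset.range_zero, Finset.sum_empty, zero_add]
    omega
  | succ k ih =>
    have h1 := ih (j + 1) (by omega)
    have h2 := h.toTab_add hlam hb j k
    rw [numTop_succ, show k + 1 + j = k + (j + 1) by omega, h1]
    rw [show k + 1 + j = k + (j + 1) by omega] at h2
    omega

theorem ContCond.numTop_toTab_of_le (h : ContCond n lam mu nu b) (hlam : IsPartition n lam)
    (hb : IsMat n lam b) {m k : ℕ} (hm : 1 ≤ m) (hk : m ≤ k) :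
    numTop lam (toTab lam nu b) m k = nu m := by
  induction k, hk using Nat.le_induction with
  | base =>
    have := h.numTop_toTab hlam hb 0 m (by omega)
    rwa [add_zero, tail_zero_row] at this
  | succ k hk ih => rw [numTop_succ, ih, toTab_of_lt (by omega), add_zero]

/-- The telescoping identity for the inverse map: the number of letters `≤ v + 1 + K` in row
`v + 1` of the tableau, in terms of the letters `v + 1` in the rows above the `K`-th of the
contratableau. -/
theorem ContCond.pre_toTab (h : ContCond n lam mu nu b) (hlam : IsPartition n lam)
    (hb : IsMat n lam b) {v K : ℕ} (hvn : v + 1 ≤ n)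
    (hK : K ≤ n) :
    pre (toTab lam nu b) (v + 1) (v + 1 + K) + tail lam nu b (K + 1) v =
      mu (v + 1) + ∑ t ∈ Finset.range (n - K), b (n - t) (v + 1) := by
  induction K with
  | zero =>
    have h1 := h.toTab_add hlam hb 0 v
    rw [tail_zero_row] at h1
    rw [Nat.sub_zero, h.2.2 (v + 1) (by omega) hvn, add_zero, pre_succ, pre_toTab_of_lt (by omega)]
    rw [add_zero] at h1
    omega
  | succ K ih =>
    have ih := ih (by omega)
    have h1 := h.toTab_add hlam hb (K + 1) v
    have h2 := tail_succ (nu := nu) hb (j := K + 1) (by omega) v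
    rw [show n - K = n - (K + 1) + 1 by omega, Finset.sum_range_succ,
      show n - (n - (K + 1)) = K + 1 by omega] at ih
    rw [← add_assoc (v + 1) K 1] at h1 ⊢
    rw [pre_succ]
    omega

theorem ContCond.isMat_toTab (h : ContCond n lam mu nu b) (hlam : IsPartition n lam)
    (hmu : IsPartition n mu) (hnu : IsPartition n nu) (hb : IsMat n lam b) :
    IsMat n mu (toTab lam nu b) := by
  have h0 : ∀ r v, ¬ (1 ≤ r ∧ 1 ≤ v ∧ v ≤ n) → toTab lam nu b r v = 0 := by
    intro r v hrv
    unfold toTab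
    split_ifs with hr
    · rw [h.tail_eq_zero hlam hnu hb (by omega), Nat.zero_sub]
    · rfl
  refine ⟨h0, fun r hr => ?_⟩
  obtain ⟨v, rfl⟩ : ∃ v, r = v + 1 := ⟨r - 1, by omega⟩
  by_cases hvn : v + 1 ≤ n
  · have h1 := h.pre_toTab hlam hb hvn le_rfl
    rw [h.tail_eq_zero hlam hnu hb (by omega), Nat.sub_self, Finset.range_zero,
      Finset.sum_empty, add_zero, add_zero] at h1
    rw [← h1]
    -- letters beyond `n` do not occur
    have : ∀ m, n ≤ m → pre (toTab lam nu b) (v + 1) m = pre (toTab lam nu b) (v + 1) n := by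
      intro m hm
      induction m, hm using Nat.le_induction with
      | base => rfl
      | succ m hm ih => rw [pre_succ, ih, h0 _ _ (by omega), add_zero]
    exact (this _ (by omega)).symm
  · rw [pre_toTab_of_lt (by omega), hmu.2.2 _ (by omega)]

theorem ContCond.tabCond_toTab (h : ContCond n lam mu nu b) (hlam : IsPartition n lam)
    (hmu : IsPartition n mu) (hnu : IsPartition n nu) (hb : IsMat n lam b) :
    TabCond n lam nu (toTab lam nu b) := by
  have hM := h.isMat_toTab hlam hmu hnu hb
  refine ⟨?_, ?_, ?_⟩
  · intro r hr i
    rcases lt_or_ge i r with hlt | hge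
    · rw [pre_toTab_of_lt (by omega)]
      exact Nat.zero_le _
    by_cases hin : n ≤ i
    · rw [hM.pre_of_le hr hin, hM.pre_of_le (by omega) (by omega)]
      exact hmu.2.1 r hr
    obtain ⟨v, rfl⟩ : ∃ v, r = v + 1 := ⟨r - 1, by omega⟩
    obtain ⟨K, rfl⟩ := Nat.exists_eq_add_of_le hge
    have h1 := h.pre_toTab hlam hb (v := v) (K := K + 1) (by omega) (by omega)
    have h2 := h.pre_toTab hlam hb (v := v + 1) (K := K) (by omega) (by omega)
    have h3 := h.2.1 (n - (K + 1)) (by omega) (v + 1) (by omega)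
    rw [show n - (K + 1) + 1 = n - K by omega] at h3
    have h4 := h.toTab_add hlam hb (K + 1) v
    rw [← add_assoc (v + 1) K 1, pre_succ] at h1
    rw [← add_assoc (v + 1) K 1] at h4
    rw [show v + 1 + 1 + K = v + 1 + K + 1 by omega] at h2
    omega
  · intro k hk i hi
    change numTop lam _ (i + 1) (k + 1) ≤ numTop lam _ i k
    rcases lt_or_ge k i with hlt | hge
    · obtain ⟨j, rfl⟩ := Nat.exists_eq_add_of_le hlt.le
      rw [h.numTop_toTab hlam hb j k hi, show k + j + 1 = k + 1 + j by omega,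
        h.numTop_toTab hlam hb j (k + 1) (by omega)]
      have := tail_succ (nu := nu) hb (j := j) (by omega) k
      omega
    · rw [h.numTop_toTab_of_le hlam hb hi hge,
        h.numTop_toTab_of_le hlam hb (by omega) (by omega)]
      exact hnu.2.1 i hi
  · intro i hi hin
    exact h.numTop_toTab_of_le hlam hb hi hin

theorem ContCond.toCont_toTab (h : ContCond n lam mu nu b) (hlam : IsPartition n lam)
    (hb : IsMat n lam b) :
    toCont lam (toTab lam nu b) = b := by
  funext j v
  unfold toCont
  split_ifs with hjv
  · obtain ⟨hj, hv⟩ := hjv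
    obtain ⟨v, rfl⟩ : ∃ u, v = u + 1 := ⟨v - 1, by omega⟩
    rw [Nat.add_sub_cancel, h.numTop_toTab hlam hb j v (by omega),
      h.numTop_toTab hlam hb j (v + 1) (by omega)]
    have := tail_succ (nu := nu) hb hj v
    omega
  · exact (hb.1 j v (by omega)).symm

end Backward

theorem ncard_mat {n : ℕ} {lam mu nu : ℕ → ℕ} (hlam : IsPartition n lam) (hmu : IsPartition n mu)
    (hnu : IsPartition n nu) :
    Set.ncard {a | IsMat n mu a ∧ TabCond n lam nu a} =
      Set.ncard {b | IsMat n lam b ∧ ContCond n lam mu nu b} := by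
  refine Set.ncard_congr (fun a _ => toCont lam a) ?_ ?_ ?_
  · rintro a ⟨ha, h⟩
    exact ⟨h.isMat_toCont hlam ha, h.contCond_toCont hlam ha⟩
  · rintro a a' ⟨ha, h⟩ ⟨ha', h'⟩ he
    exact toCont_injOn hlam ha ha' h h' he
  · rintro b ⟨hb, h⟩
    exact ⟨toTab lam nu b, ⟨h.isMat_toTab hlam hmu hnu hb, h.tabCond_toTab hlam hmu hnu hb⟩,
      h.toCont_toTab hlam hb⟩

/-! ### Tableaux and contratableaux as row-increasing fillings -/

theorem tab_iff {n : ℕ} {lam mu nu : ℕ → ℕ} (hlam : IsPartition n lam) (hmu : IsPartition n mu)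
    (T : ℕ → ℕ → Finset ℕ) :
    (IsSSVT n (ShapeBox mu) T ∧ (∀ i j, ShapeBox mu i j → (T i j).card = 1) ∧
      LamDominant n lam (rowWordRect n (mu 1) T) ∧
      ∀ i, 1 ≤ i → i ≤ n → lam i + wtT n (mu 1) T i = nu i) ↔
    RowFill n (fun _ => 0) mu T ∧ TabCond n lam nu (rowOcc (mu 1) T) := by
  have hbox : ShapeBox mu = Box (fun _ => 0) mu := by
    funext r c
    simp only [ShapeBox, Box, zero_add, eq_iff_iff]
    omega
  have hW : ∀ r, 1 ≤ r → (fun _ => 0 : ℕ → ℕ) r + mu r ≤ mu 1 := fun r hr => by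
    simpa using hmu.le_one hr
  have hdom : ∀ h : RowFill n (fun _ => 0) mu T, (LamDominant n lam (rowWordRect n (mu 1) T) ↔ _) :=
    fun h => lamDominant_rows hlam (fun i => rowWord (mu 1) T (i + 1))
      (fun r => h.pairwise_rowWord _ _) n
  have hcol : ∀ h : RowFill n (fun _ => 0) mu T, (∀ r, 1 ≤ r → (_ ↔ _)) := fun h r hr =>
    h.col_iff hW (p := r) (q := r + 1) hr (by omega) le_rfl (by simpa using hmu.2.1 r hr)
  simp only [count_rowWord] at hdom
  simp only [zero_add] at hcol
  simp only [wtT, sum_Icc_one]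
  rw [hbox]
  constructor
  · rintro ⟨⟨h1, h2, h3, h4, h5⟩, h6, h7, h8⟩
    have h : RowFill n (fun _ => 0) mu T := ⟨h2, h3, h4, h6⟩
    exact ⟨h, fun r hr => (hcol h r hr).1 (h5 r), (hdom h).1 h7, h8⟩
  · rintro ⟨h, h5, h7, h8⟩
    refine ⟨⟨?_, h.1, h.2.1, h.2.2.1, fun r c hb => ?_⟩, h.2.2.2, (hdom h).2 h7, h8⟩
    · intro r c hb
      rw [← Finset.card_pos, h.2.2.2 r c hb]
      exact one_pos
    · exact (hcol h r hb.1).2 (h5 r hb.1) c hb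

theorem cont_iff {n : ℕ} {lam mu nu : ℕ → ℕ} (hlam : IsPartition n lam) (hmu : IsPartition n mu)
    (S : ℕ → ℕ → Finset ℕ) :
    (IsSVCT n lam S ∧ (∀ j c, ContraBox n lam j c → (S j c).card = 1) ∧
      LamDominant n mu (contraRowWord n (lam 1) S) ∧
      ∀ i, 1 ≤ i → i ≤ n → mu i + wtT n (lam 1) S i = nu i) ↔
    RowFill n (fun j => lam 1 - lam j) lam S ∧ ContCond n lam mu nu (rowOcc (lam 1) S) := by
  have hbox : ContraBox n lam = Box (fun j => lam 1 - lam j) lam := by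
    funext j c
    simp only [ContraBox, Box, eq_iff_iff]
    by_cases hj : 1 ≤ j
    · have h1 := hlam.le_one hj
      have h2 := hlam.2.2 j
      omega
    · omega
  have hW : ∀ j, 1 ≤ j → (fun j => lam 1 - lam j) j + lam j ≤ lam 1 := fun j hj => by
    have := hlam.le_one hj
    dsimp only
    omega
  have hdom : ∀ h : RowFill n (fun j => lam 1 - lam j) lam S,
      (LamDominant n mu (contraRowWord n (lam 1) S) ↔ ∀ k, k < n → ∀ i, 1 ≤ i →
        mu (i + 1) + ∑ t ∈ Finset.range (k + 1), rowOcc (lam 1) S (n - t) (i + 1) ≤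
          mu i + ∑ t ∈ Finset.range k, rowOcc (lam 1) S (n - t) i) := fun h => by
    have h1 := lamDominant_rows hmu (fun t => rowWord (lam 1) S (n - t))
      (fun r => h.pairwise_rowWord _ _) n
    rw [← map_reverse_range (fun j => rowWord (lam 1) S j)] at h1
    simp only [count_rowWord] at h1
    exact h1
  have hcol : ∀ h : RowFill n (fun j => lam 1 - lam j) lam S, (∀ r, 1 ≤ r → (_ ↔ _)) :=
    fun h r hr => h.col_iff hW (p := r + 1) (q := r) (by omega) hr
      (by have := hlam.2.1 r hr; omega)
      (by
        have h1 := hlam.le_one hr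
        have h2 := hlam.le_one (j := r + 1) (by omega)
        omega)
  simp only [wtT, sum_Icc_one]
  rw [hbox]
  have hflip : ∀ i, ∑ t ∈ Finset.range n, rowOcc (lam 1) S (n - t) i =
      ∑ t ∈ Finset.range n, rowOcc (lam 1) S (t + 1) i :=
    fun i => sum_range_flip (fun r => rowOcc (lam 1) S r i) n
  unfold IsSVCT ContCond
  simp only [hflip]
  rw [hbox]
  constructor
  · rintro ⟨⟨h1, h2, h3, h4, h5⟩, h6, h7, h8⟩
    have h : RowFill n (fun j => lam 1 - lam j) lam S := ⟨h2, h3, h4, h6⟩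
    exact ⟨h, fun r hr => (hcol h r hr).1 (fun c hp hq => h5 r c hq hp), (hdom h).1 h7, h8⟩
  · rintro ⟨h, h5, h7, h8⟩
    refine ⟨⟨?_, h.1, h.2.1, h.2.2.1, fun r c hb hb' => ?_⟩, h.2.2.2, (hdom h).2 h7, h8⟩
    · intro r c hb
      rw [← Finset.card_pos, h.2.2.2 r c hb]
      exact one_pos
    · exact (hcol h r hb.1).2 (h5 r hb.1) c hb' hb

/-- Let `lam, mu, nu ∈ P[n]` with `|nu| = |lam| + |mu|`.
Then the number of `lam`-dominant semi-standard Young tableaux of shape `mu`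
with entries `≤ n` and weight `nu - lam` equals the number of `mu`-dominant
contratableaux of shape `lam` with entries `≤ n` and weight `nu - mu`
(Carré's contratableau rule for `c^nu_{lam,mu}`).  Semi-standard Young
tableaux and contratableaux are the set-valued ones all of whose cells are
singletons. -/
theorem card_dominant_tab_eq_card_dominant_cont
    (n : ℕ) (hn : 0 < n) (lam mu nu : ℕ → ℕ)
    (hlam : IsPartition n lam) (hmu : IsPartition n mu) (hnu : IsPartition n nu)
    (hsum : sumParts n nu = sumParts n lam + sumParts n mu) :
    Set.ncard {T : ℕ → ℕ → Finset ℕ |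
        IsSSVT n (ShapeBox mu) T ∧
        (∀ i j, ShapeBox mu i j → (T i j).card = 1) ∧
        LamDominant n lam (rowWordRect n (mu 1) T) ∧
        ∀ i, 1 ≤ i → i ≤ n → lam i + wtT n (mu 1) T i = nu i} =
    Set.ncard {S : ℕ → ℕ → Finset ℕ |
        IsSVCT n lam S ∧
        (∀ j c, ContraBox n lam j c → (S j c).card = 1) ∧
        LamDominant n mu (contraRowWord n (lam 1) S) ∧
        ∀ i, 1 ≤ i → i ≤ n → mu i + wtT n (lam 1) S i = nu i} := by
  have hWmu : ∀ r, 1 ≤ r → (fun _ => 0 : ℕ → ℕ) r + mu r ≤ mu 1 := fun r hr => by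
    simpa using hmu.le_one hr
  have hWlam : ∀ j, 1 ≤ j → (fun j => lam 1 - lam j) j + lam j ≤ lam 1 := fun j hj => by
    have := hlam.le_one hj
    dsimp only
    omega
  simp only [tab_iff hlam hmu, cont_iff hlam hmu]
  rw [ncard_rowFill hWmu (TabCond n lam nu), ncard_rowFill hWlam (ContCond n lam mu nu)]
  exact ncard_mat hlam hmu hnu
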